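/- Let k be a field of characteristic zero, and let m, n ≥ 1. Let P be a polynomial in the m·n² variables given by the entries of m matrices A₁,…,A_m of size n×n over k, and suppose P is invariant under simultaneous conjugation: P(g·A₁·g⁻¹,…,g·A_m·g⁻¹) = P(A₁,…,A_m) for every invertible n×n matrix g over k and all A₁,…,A_m. Then P lies in the k-subalgebra generated by the trace functions (A₁,…,A_m) ↦ tr(A_{i₁}·A_{i₂}·⋯·A_{i_r}), where r ≥ 1 and i₁,…,i_r ∈ {1,…,m}. -/

import Mathlib

open Matrix MvPolynomial

/-!
The proof is Schur–Weyl duality, carried out on coefficient tensors instead of on multilinear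
polarizations.

The action of `g` on the entry variables is a linear substitution, so it commutes with taking
homogeneous components and `P` may be assumed homogeneous of degree `d`. In characteristic zero `P`
is `∑ w, c w • ∏ j, X (w j)`, over words `w` of length `d` in the variables, for a *unique* `c`
invariant under permuting the letters of words (`exists_symm_rep`, `eq_of_sum_eq`). Uniqueness
turns the invariance of `P` into an invariance of `c` (`coeff_invariant`). A word in the variables
`(i, s, t)` is a triple `(a, s, t)` of words; fixing `a` and reading `c (a, s, t)` as a matrix
`C a` with rows `t` and columns `s`, that is as an endomorphism of `V^{⊗d}` for `V = kⁿ`, the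
invariance says that `C a` commutes with `g^{⊗d}` for every invertible `g`.

Since invertible matrices are Zariski dense, `C a` then commutes with every endomorphism of `V^{⊗d}`
that commutes with the symmetric group `S_d` (`mul_comm_of_symmetric`). The double centralizer
theorem, proved with the averaged projection of Maschke's theorem (`mem_span_of_commute`), shows
that `C a` is a linear combination of permutation operators. The polynomial attached to a single
permutation is the product over its cycles of traces of words in the generic matrices
(`sum_prod_perm_mem`).
-/

/-! ### Symmetric coefficients of homogeneous polynomials -/

/-- Two words with the same letters, counted with multiplicity, differ by a permutation of the
positions. -/
theorem exists_perm_of_count {κ : Type*} [DecidableEq κ] {d : ℕ} (w w' : Fin d → κ)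
    (h : ∑ j, Finsupp.single (w j) 1 = ∑ j, (Finsupp.single (w' j) 1 : κ →₀ ℕ)) :
    ∃ σ : Equiv.Perm (Fin d), w = w' ∘ σ := by
  have e : ∀ c, Nonempty ({j // w j = c} ≃ {j // w' j = c}) := by
    intro c
    refine Fintype.card_eq.1 ?_
    have := DFunLike.congr_fun h c
    simpa [Finsupp.finsetSum_apply, Finsupp.single_apply, Fintype.card_subtype] using this
  exact ⟨Equiv.ofFiberEquiv fun c => (e c).some,
    funext fun j => (Equiv.ofFiberEquiv_map (fun c => (e c).some) j).symm⟩

theorem prod_X_eq {κ k : Type*} [CommSemiring k] {d : ℕ} (w : Fin d → κ) :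
    ∏ j, (X (w j) : MvPolynomial κ k) = monomial (∑ j, Finsupp.single (w j) 1) 1 := by
  simp only [X]
  rw [monomial_sum_one]

/-- A function of words that ignores the order of the letters is a function of the monomial
`∏ j, X (w j)`, so it extends to a linear functional on polynomials. -/
theorem exists_pairing {κ k : Type*} [Field k] {d : ℕ} (A : (Fin d → κ) → k)
    (hA : ∀ w (σ : Equiv.Perm (Fin d)), A (w ∘ σ) = A w) :
    ∃ φ : MvPolynomial κ k →ₗ[k] k, ∀ w : Fin d → κ, φ (∏ j, X (w j)) = A w := by
  classical
  refine ⟨(basisMonomials κ k).constr k fun μ =>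
    if h : ∃ w : Fin d → κ, ∑ j, Finsupp.single (w j) 1 = μ then A h.choose else 0, fun w => ?_⟩
  rw [prod_X_eq, show monomial (∑ j, Finsupp.single (w j) 1) (1 : k) =
    basisMonomials κ k (∑ j, Finsupp.single (w j) 1) by simp, Module.Basis.constr_basis]
  have h : ∃ w' : Fin d → κ,
    ∑ j, Finsupp.single (w' j) 1 = ∑ j, (Finsupp.single (w j) 1 : κ →₀ ℕ) := ⟨w, rfl⟩
  rw [dif_pos h]
  obtain ⟨σ, hσ⟩ := exists_perm_of_count _ _ h.choose_spec
  rw [hσ, hA]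

/-- Uniqueness of symmetric coefficients. The coefficient at `w₀` is recovered, up to the factor `d!`,
by pairing with the symmetrized indicator function of `w₀`. -/
theorem eq_of_sum_eq {κ k : Type*} [Fintype κ] [Field k] [CharZero k] {d : ℕ}
    (c c' : (Fin d → κ) → k)
    (hc : ∀ w (σ : Equiv.Perm (Fin d)), c (w ∘ σ) = c w)
    (hc' : ∀ w (σ : Equiv.Perm (Fin d)), c' (w ∘ σ) = c' w)
    (h : ∑ w, c w • ∏ j, (X (w j) : MvPolynomial κ k) = ∑ w, c' w • ∏ j, X (w j)) :
    c = c' := by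
  classical
  funext w₀
  obtain ⟨φ, hφ⟩ := exists_pairing
    (fun w => ∑ σ : Equiv.Perm (Fin d), if w ∘ σ = w₀ then (1 : k) else 0) (by
      intro w τ
      exact Fintype.sum_equiv (Equiv.mulLeft τ) _ _ fun σ => rfl)
  have key : ∀ b : (Fin d → κ) → k, (∀ w (σ : Equiv.Perm (Fin d)), b (w ∘ σ) = b w) →
      φ (∑ w, b w • ∏ j, (X (w j) : MvPolynomial κ k)) = d.factorial * b w₀ := by
    intro b hb
    simp only [map_sum, map_smul, hφ, smul_eq_mul, Finset.mul_sum]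
    rw [Finset.sum_comm]
    have : ∀ σ : Equiv.Perm (Fin d),
        ∑ w, b w * (if w ∘ σ = w₀ then (1 : k) else 0) = b w₀ := by
      intro σ
      rw [Finset.sum_eq_single (w₀ ∘ σ.symm)]
      · rw [hb, if_pos (by ext; simp), mul_one]
      · rintro w - hw
        rw [if_neg, mul_zero]
        rintro rfl
        exact hw (by ext; simp)
      · simp
    rw [Finset.sum_congr rfl fun σ _ => this σ]
    simp [Fintype.card_perm]
  have := key c hc
  rw [h, key c' hc'] at this
  exact (mul_left_cancel₀ (by exact_mod_cast d.factorial_ne_zero) this).symm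

/-- Existence of symmetric coefficients: average arbitrary coefficients over the permutations of
the positions. -/
theorem exists_symm_rep {κ k : Type*} [Fintype κ] [Field k] [CharZero k] {d : ℕ}
    (P : MvPolynomial κ k) (hP : P.IsHomogeneous d) :
    ∃ c : (Fin d → κ) → k, (∀ w (σ : Equiv.Perm (Fin d)), c (w ∘ σ) = c w) ∧
      P = ∑ w, c w • ∏ j, X (w j) := by
  classical
  have h1 : P ∈ Submodule.span k
      (Set.range fun w : Fin d → κ => ∏ j, (X (w j) : MvPolynomial κ k)) := by
    rw [P.as_sum]
    refine Submodule.sum_mem _ fun μ hμ => ?_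
    have hdeg : Multiset.card (Finsupp.toMultiset μ) = d := by
      rw [Finsupp.card_toMultiset, Finsupp.sum]
      have := hP (mem_support_iff.1 hμ)
      rw [Finsupp.weight_apply] at this
      simpa [Finsupp.sum] using this
    obtain ⟨l, hl⟩ := Quot.exists_rep (Finsupp.toMultiset μ)
    have hl' : (l : Multiset κ) = Finsupp.toMultiset μ := hl
    have hlen : l.length = d := by rw [← hdeg, ← hl']; rfl
    subst hlen
    have : monomial μ (coeff μ P) = coeff μ P • ∏ j, (X (l.get j) : MvPolynomial κ k) := by
      rw [monomial_eq, smul_eq_C_mul]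
      congr 1
      have h2 : ((Finsupp.toMultiset μ).map (X : κ → MvPolynomial κ k)).prod
          = μ.prod fun i e => X i ^ e := by
        rw [Finsupp.toMultiset_map, Finsupp.prod_toMultiset, Finsupp.prod_mapDomain_index] <;>
        simp [pow_add]
      rw [← h2, ← hl', Multiset.map_coe, Multiset.prod_coe, ← List.prod_ofFn]
      congr 1
      apply List.ext_get <;> simp
    rw [this]
    exact Submodule.smul_mem _ _ (Submodule.subset_span ⟨_, rfl⟩)
  obtain ⟨c, hc⟩ := (Submodule.mem_span_range_iff_exists_fun k).1 h1
  have hd : (d.factorial : k) ≠ 0 := by exact_mod_cast d.factorial_ne_zero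
  refine ⟨fun w => (d.factorial : k)⁻¹ * ∑ σ : Equiv.Perm (Fin d), c (w ∘ σ), ?_, ?_⟩
  · intro w τ
    exact congrArg _ (Fintype.sum_equiv (Equiv.mulLeft τ) _ _ fun σ => rfl)
  · simp only [mul_smul, Finset.sum_smul]
    rw [← Finset.smul_sum, Finset.sum_comm]
    have : ∀ σ : Equiv.Perm (Fin d),
        ∑ w, c (w ∘ σ) • ∏ j, (X (w j) : MvPolynomial κ k) = P := by
      intro σ
      rw [← hc]
      refine Fintype.sum_equiv (σ.symm.arrowCongr (Equiv.refl κ)) _ _ fun w => ?_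
      congr 1
      exact (Equiv.prod_comp σ fun j => (X (w j) : MvPolynomial κ k)).symm
    simp only [this, Finset.sum_const, Finset.card_univ, Fintype.card_perm, Fintype.card_fin]
    rw [← Nat.cast_smul_eq_nsmul k, smul_smul, inv_mul_cancel₀ hd, one_smul]

/-! ### The double centralizer theorem for a finite group -/

/-- A matrix commuting with the commutant of a finite group representation `R` lies in the span `B`
of `R`. By Maschke's theorem there is a projection `p` of the full matrix algebra onto `B` that
commutes with left multiplication by `R g`. Its components lie in the commutant of `R`, so `p`
also commutes with left multiplication by `C`, and `C = C * p 1 = p C ∈ B`. -/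
theorem mem_span_of_commute {k W G : Type*} [Field k] [CharZero k] [Fintype W] [DecidableEq W]
    [Group G] [Fintype G] (R : G →* Matrix W W k) (C : Matrix W W k)
    (hC : ∀ A : Matrix W W k, (∀ g, R g * A = A * R g) → C * A = A * C) :
    C ∈ Submodule.span k (Set.range R) := by
  set B := Submodule.span k (Set.range R) with hB
  obtain ⟨π, hπ⟩ := B.subtype.exists_leftInverse_of_injective (Submodule.ker_subtype B)
  have hG : (Fintype.card G : k) ≠ 0 := by exact_mod_cast Fintype.card_ne_zero
  have hRB : ∀ g, ∀ Y ∈ B, R g * Y ∈ B := by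
    intro g Y hY
    have : B ≤ B.comap (LinearMap.mulLeft k (R g)) := by
      refine Submodule.span_le.2 ?_
      rintro _ ⟨h, rfl⟩
      exact Submodule.subset_span ⟨g * h, by simp⟩
    exact this hY
  -- An arbitrary projection `π` onto `B`, averaged over `G`.
  let p : Matrix W W k →ₗ[k] Matrix W W k := (Fintype.card G : k)⁻¹ • ∑ g : G,
    LinearMap.mulLeft k (R g⁻¹) ∘ₗ B.subtype ∘ₗ π ∘ₗ LinearMap.mulLeft k (R g)
  have hp : ∀ Y, p Y = (Fintype.card G : k)⁻¹ • ∑ g : G, R g⁻¹ * (π (R g * Y) : Matrix W W k) := by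
    intro Y; simp [p]
  have hpB : ∀ Y, p Y ∈ B := by
    intro Y
    rw [hp]
    exact B.smul_mem _ (B.sum_mem fun g _ => hRB _ _ (π _).2)
  have hp1 : p 1 = 1 := by
    rw [hp]
    have : ∀ g : G, R g⁻¹ * (π (R g * 1) : Matrix W W k) = 1 := by
      intro g
      have := LinearMap.congr_fun hπ ⟨R g, Submodule.subset_span ⟨g, rfl⟩⟩
      simp only [LinearMap.comp_apply, Submodule.subtype_apply, LinearMap.id_apply] at this
      rw [mul_one, this, ← map_mul, inv_mul_cancel, map_one]
    simp only [this, Finset.sum_const, Finset.card_univ]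
    rw [← Nat.cast_smul_eq_nsmul k, smul_smul, inv_mul_cancel₀ hG, one_smul]
  have hpR : ∀ h Y, p (R h * Y) = R h * p Y := by
    intro h Y
    rw [hp, hp, Matrix.mul_smul, Finset.mul_sum]
    congr 1
    refine Fintype.sum_equiv (Equiv.mulRight h) _ _ fun g => ?_
    simp [← mul_assoc, ← map_mul]
  have hpe : ∀ Y s t, p Y s t = ∑ v, ∑ u, p (single u v 1) s t * Y u v := by
    intro Y s t
    conv_lhs => rw [matrix_eq_sum_single Y]
    rw [map_sum, Matrix.sum_apply, Finset.sum_comm]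
    refine Finset.sum_congr rfl fun u _ => ?_
    rw [map_sum, Matrix.sum_apply]
    refine Finset.sum_congr rfl fun v _ => ?_
    have : single u v (Y u v) = Y u v • (single u v 1 : Matrix W W k) := by simp
    rw [this, map_smul, Matrix.smul_apply, smul_eq_mul, mul_comm]
  -- `p` takes column `v` of its argument to column `t` of its value through the matrix `A t v`.
  let A : W → W → Matrix W W k := fun t v => Matrix.of fun s u => p (single u v 1) s t
  have hAR : ∀ t v g, R g * A t v = A t v * R g := by
    intro t v g
    ext s u
    have h1 := congrFun (congrFun (hpR g (single u v 1)) s) t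
    rw [hpe, Matrix.mul_apply] at h1
    rw [Matrix.mul_apply, Matrix.mul_apply]
    simp only [A, Matrix.of_apply]
    rw [← h1, Finset.sum_eq_single v]
    · simp
    · intro b _ hb
      simp [hb]
    · simp
  have hA1 : ∀ Y s t, p Y s t = ∑ v, (A t v * Y) s v := hpe
  have : p C = C := by
    ext s t
    have h2 : ∀ v, (A t v * C) s v = ∑ u, C s u * (A t v * 1 : Matrix W W k) u v := by
      intro v
      rw [← hC _ (hAR t v), Matrix.mul_apply, mul_one]
    have h3 : ∀ u, ∑ v, (A t v * 1 : Matrix W W k) u v = p 1 u t :=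
      fun u => (hA1 1 u t).symm
    rw [hA1]
    simp only [h2]
    rw [Finset.sum_comm]
    simp only [← Finset.mul_sum, h3, hp1]
    rw [← Matrix.mul_apply, mul_one]
  rw [← this]
  exact hpB C

/-! ### Permutations and traces of words -/

open Classical in
/-- The contraction of a family of matrices along a permutation is a product of traces, one for
each cycle. The induction removes the index `none`: a fixed point contributes the factor
`trace (M none)`; otherwise `M none` is merged into the matrix at the index `a` that `σ` sends to
`none`, and `Equiv.removeNone σ` is `σ` with `none` skipped. -/
theorem sum_prod_perm_mem {k R N : Type*} [CommRing k] [CommRing R] [Algebra k R] [Fintype N]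
    (T : Subsemigroup (Matrix N N R)) (S : Subalgebra k R)
    (hS : ∀ M ∈ T, M.trace ∈ S) (ι : Type) [Fintype ι] :
    ∀ (σ : Equiv.Perm ι) (M : ι → Matrix N N R), (∀ j, M j ∈ T) →
      ∑ s : ι → N, ∏ j, M j (s j) (s (σ j)) ∈ S := by
  refine Fintype.induction_empty_option (P := fun ι _ =>
    ∀ (σ : Equiv.Perm ι) (M : ι → Matrix N N R), (∀ j, M j ∈ T) →
      ∑ s : ι → N, ∏ j, M j (s j) (s (σ j)) ∈ S) ?_ ?_ ?_ ι
  · intro α β _ e ih σ M hM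
    let : Fintype α := Fintype.ofEquiv β e.symm
    have := ih ((e.trans σ).trans e.symm) (fun a => M (e a)) (fun a => hM _)
    convert! this using 1
    refine Fintype.sum_equiv (e.symm.arrowCongr (Equiv.refl N)) _ _ fun s => ?_
    exact (Fintype.prod_equiv e _ _ fun a => by simp).symm
  · intro σ M hM
    simp
  · intro ι _ ih σ M hM
    have hsum : ∑ s : Option ι → N, ∏ j, M j (s j) (s (σ j)) =
        ∑ s : ι → N, ∑ x : N, M none x ((σ none).elim x s) *
          ∏ i, M (some i) (s i) ((σ (some i)).elim x s) := by
      rw [← Fintype.sum_prod_type']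
      let e : (Option ι → N) ≃ (ι → N) × N :=
        { toFun := fun f => (fun i => f (some i), f none)
          invFun := fun p o => o.elim p.2 p.1
          left_inv := fun f => by ext (_ | _) <;> rfl
          right_inv := fun p => rfl }
      refine (Fintype.sum_equiv e.symm _ _ fun p => ?_).symm
      rw [Fintype.prod_option]
      rfl
    suffices h : ∑ s : ι → N, ∑ x : N, M none x ((σ none).elim x s) *
        ∏ i, M (some i) (s i) ((σ (some i)).elim x s) ∈ S by
      rw [← hsum] at h
      convert! h
    set τ := Equiv.removeNone σ with hτ
    rcases hn : σ none with _ | b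
    · have h1 : ∀ i, σ (some i) = some (τ i) := by
        intro i
        refine (Equiv.removeNone_some σ (Option.ne_none_iff_exists'.1 fun h => ?_)).symm
        exact Option.some_ne_none i (σ.injective (h.trans hn.symm))
      simp only [h1, Option.elim, ← Finset.sum_mul]
      rw [← Finset.mul_sum]
      exact S.mul_mem (hS _ (hM none)) (ih τ _ fun i => hM _)
    · obtain ⟨a, ha⟩ : ∃ a, σ (some a) = none := by
        rcases h : σ.symm none with _ | a
        · rw [Equiv.symm_apply_eq, hn] at h
          cases h
        · exact ⟨a, by rw [← h]; simp⟩
      have hτa : τ a = b := by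
        have := Equiv.removeNone_none σ ha
        rw [hn] at this
        exact Option.some_injective _ this
      have h1 : ∀ i, i ≠ a → σ (some i) = some (τ i) := by
        intro i hi
        refine (Equiv.removeNone_some σ (Option.ne_none_iff_exists'.1 fun h => hi ?_)).symm
        exact Option.some_injective _ (σ.injective (h.trans ha.symm))
      have := ih τ (fun i => if i = a then M (some a) * M none else M (some i)) (by
        intro i
        split_ifs
        · exact T.mul_mem (hM _) (hM _)
        · exact hM _)
      convert this using 2 with s _
      rw [← Finset.mul_prod_erase _ _ (Finset.mem_univ a), if_pos rfl, Matrix.mul_apply,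
        Finset.sum_mul]
      refine Finset.sum_congr rfl fun x _ => ?_
      rw [← Finset.mul_prod_erase _ _ (Finset.mem_univ a), ha, hτa]
      simp only [Option.elim]
      rw [← mul_assoc, mul_comm (M none _ _)]
      congr 1
      refine Finset.prod_congr rfl fun i hi => ?_
      rw [h1 i (Finset.ne_of_mem_erase hi), if_neg (Finset.ne_of_mem_erase hi)]

/-! ### Tensor powers, permutation operators and their commutants -/

/-- The tensor power `g^{⊗d}`, as a matrix indexed by words of length `d`. -/
def wordMatrix {R N : Type*} [CommRing R] (d : ℕ) (g : Matrix N N R) :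
    Matrix (Fin d → N) (Fin d → N) R :=
  Matrix.of fun s t => ∏ j, g (s j) (t j)

theorem wordMatrix_mul {R N : Type*} [CommRing R] [Fintype N] [DecidableEq N] (d : ℕ)
    (g h : Matrix N N R) :
    wordMatrix d (g * h) = wordMatrix d g * wordMatrix d h := by
  ext s t
  simp only [wordMatrix, Matrix.of_apply, Matrix.mul_apply, Finset.prod_univ_sum,
    Fintype.piFinset_univ, Finset.prod_mul_distrib]

theorem wordMatrix_one {R N : Type*} [CommRing R] [Fintype N] [DecidableEq N] (d : ℕ) :
    wordMatrix d (1 : Matrix N N R) = 1 := by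
  ext s t
  simp only [wordMatrix, Matrix.of_apply, Matrix.one_apply, Finset.prod_ite_zero, funext_iff]
  simp

/-- The representation of the symmetric group on `V^{⊗d}` by permuting tensor factors: the matrix
of `σ` has its entry `1` in row `s` at the column `s ∘ σ`, which makes `σ ↦ permHom σ`
multiplicative without an inverse. -/
def permHom (k N : Type*) [CommRing k] [Fintype N] [DecidableEq N] (d : ℕ) :
    Equiv.Perm (Fin d) →* Matrix (Fin d → N) (Fin d → N) k where
  toFun σ := Matrix.of fun s t => if t = s ∘ σ then 1 else 0
  map_one' := by
    ext s t
    simp [Matrix.one_apply, eq_comm]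
  map_mul' σ τ := by
    ext s t
    simp only [Matrix.mul_apply, Matrix.of_apply]
    rw [Finset.sum_eq_single (s ∘ σ)]
    · simp only [Equiv.Perm.coe_mul, Function.comp_assoc, if_true, one_mul]
      exact if_congr Iff.rfl rfl rfl
    · intro b _ hb
      rw [if_neg hb, zero_mul]
    · simp

theorem permHom_mul_apply {k N : Type*} [CommRing k] [Fintype N] [DecidableEq N] {d : ℕ}
    (σ : Equiv.Perm (Fin d)) (A : Matrix (Fin d → N) (Fin d → N) k) (s t : Fin d → N) :
    (permHom k N d σ * A) s t = A (s ∘ σ) t := by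
  simp [permHom, Matrix.mul_apply]

theorem mul_permHom_apply {k N : Type*} [CommRing k] [Fintype N] [DecidableEq N] {d : ℕ}
    (σ : Equiv.Perm (Fin d)) (A : Matrix (Fin d → N) (Fin d → N) k) (s t : Fin d → N) :
    (A * permHom k N d σ) s (t ∘ σ) = A s t := by
  simp only [permHom, Matrix.mul_apply, MonoidHom.coe_mk, OneHom.coe_mk, Matrix.of_apply]
  rw [Finset.sum_eq_single t]
  · simp
  · intro b _ hb
    rw [if_neg, mul_zero]
    intro h
    exact hb (σ.surjective.injective_comp_right h).symm
  · simp

/-- A matrix commuting with all `g^{⊗d}`, `g` invertible, commutes with every `A` invariant under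
`S_d`. The entries of `C * g^{⊗d} - g^{⊗d} * C` are polynomials in the entries of `g` that vanish
where `det g ≠ 0`, hence vanish identically; pairing them with `A` gives `C * A - A * C`. -/
theorem mul_comm_of_symmetric {k N : Type*} [Field k] [CharZero k] [Fintype N] [DecidableEq N]
    {d : ℕ} (C : Matrix (Fin d → N) (Fin d → N) k)
    (hC : ∀ g : (Matrix N N k)ˣ, C * wordMatrix d (g : Matrix N N k) = wordMatrix d g * C)
    (A : Matrix (Fin d → N) (Fin d → N) k)
    (hA : ∀ s t (σ : Equiv.Perm (Fin d)), A (s ∘ σ) (t ∘ σ) = A s t) :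
    C * A = A * C := by
  ext s t
  let Q : MvPolynomial (N × N) k :=
    ∑ u, C s u • ∏ j, X (u j, t j) - ∑ u, C u t • ∏ j, X (s j, u j)
  have hQ : Q = 0 := by
    have h : (mvPolynomialX N N k).det * Q = 0 := by
      refine MvPolynomial.funext fun x => ?_
      rw [map_mul, map_zero]
      set g : Matrix N N k := Matrix.of fun i j => x (i, j) with hg
      have h1 : eval x (mvPolynomialX N N k).det = g.det := by
        rw [RingHom.map_det]
        congr 1
        ext i j
        simp [mvPolynomialX, hg]
      have h2 : eval x Q = (C * wordMatrix d g) s t - (wordMatrix d g * C) s t := by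
        simp [Q, Matrix.mul_apply, wordMatrix, hg, smul_eval, mul_comm]
      rw [h1, h2]
      by_cases hdet : g.det = 0
      · rw [hdet, zero_mul]
      · have hu : IsUnit g := (Matrix.isUnit_iff_isUnit_det g).2 (isUnit_iff_ne_zero.2 hdet)
        obtain ⟨g', hg'⟩ := hu
        rw [← hg', hC g', sub_self, mul_zero]
    exact (mul_eq_zero.1 h).resolve_left (det_mvPolynomialX_ne_zero N k)
  obtain ⟨φ, hφ⟩ := exists_pairing (κ := N × N)
    (fun w : Fin d → N × N => A (fun j => (w j).1) (fun j => (w j).2))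
    (fun w σ => hA (fun j => (w j).1) (fun j => (w j).2) σ)
  have h := congrArg φ hQ
  have e1 : ∀ u v : Fin d → N, φ (∏ j, X (u j, v j)) = A u v :=
    fun u v => hφ fun j => (u j, v j)
  simp only [Q, map_sub, map_sum, map_smul, e1, map_zero, smul_eq_mul] at h
  rw [Matrix.mul_apply, Matrix.mul_apply, sub_eq_zero.1 h]
  exact Finset.sum_congr rfl fun u _ => mul_comm _ _

/-! ### Linear substitutions -/

/-- The substitution of the linear form `∑ q, τ p q • X q` for each variable `X p`. -/
noncomputable def linSubst {κ k : Type*} [Fintype κ] [CommRing k] (τ : Matrix κ κ k) :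
    MvPolynomial κ k →ₐ[k] MvPolynomial κ k :=
  aeval fun p => ∑ q, τ p q • X q

theorem linSubst_prod_X {κ k : Type*} [Fintype κ] [CommRing k] (τ : Matrix κ κ k)
    {d : ℕ} (w : Fin d → κ) :
    linSubst τ (∏ j, X (w j)) = ∑ w', wordMatrix d τ w w' • ∏ j, X (w' j) := by
  classical
  simp only [linSubst, map_prod, aeval_X, Finset.prod_univ_sum, Fintype.piFinset_univ]
  refine Finset.sum_congr rfl fun w' _ => ?_
  simp only [smul_eq_C_mul, Finset.prod_mul_distrib, wordMatrix, Matrix.of_apply, map_prod]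

theorem homogeneousComponent_linSubst {κ k : Type*} [Fintype κ] [CommRing k] (τ : Matrix κ κ k)
    (d : ℕ) (P : MvPolynomial κ k) :
    homogeneousComponent d (linSubst τ P) = linSubst τ (homogeneousComponent d P) := by
  conv_lhs => rw [← sum_homogeneousComponent P]
  have hh : ∀ e, (linSubst τ (homogeneousComponent e P)).IsHomogeneous e := by
    intro e
    have h1 := (homogeneousComponent_isHomogeneous e P).aeval (n := 1)
      (fun p => ∑ q, τ p q • (X q : MvPolynomial κ k)) fun p =>
      IsHomogeneous.sum Finset.univ (fun q => τ p q • (X q : MvPolynomial κ k)) 1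
        fun q _ => (homogeneousSubmodule κ k 1).smul_mem _ (isHomogeneous_X k q)
    rwa [one_mul] at h1
  rw [map_sum, map_sum]
  rw [Finset.sum_congr rfl fun e _ => homogeneousComponent_of_mem (hh e)]
  rw [Finset.sum_ite_eq]
  split_ifs with h
  · rfl
  · rw [homogeneousComponent_eq_zero, map_zero]
    simpa using h

/-- If a homogeneous polynomial is fixed by a linear substitution `τ`, then its symmetric
coefficient vector is fixed by `τ^{⊗d}`. -/
theorem coeff_invariant {κ k : Type*} [Fintype κ] [Field k] [CharZero k] {d : ℕ}
    (c : (Fin d → κ) → k) (hc : ∀ w (σ : Equiv.Perm (Fin d)), c (w ∘ σ) = c w)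
    (τ : Matrix κ κ k)
    (h : linSubst τ (∑ w, c w • ∏ j, X (w j)) = ∑ w, c w • ∏ j, X (w j)) :
    c ᵥ* wordMatrix d τ = c := by
  refine eq_of_sum_eq _ _ ?_ hc ?_
  · intro w σ
    simp only [Matrix.vecMul, dotProduct, wordMatrix, Matrix.of_apply]
    refine Fintype.sum_equiv (σ.arrowCongr (Equiv.refl κ)) _ _ fun v => ?_
    congr 1
    · exact (hc v σ.symm).symm
    · exact Fintype.prod_equiv σ _ _ fun j => by simp
  · rw [← h, map_sum]
    simp only [map_smul, linSubst_prod_X, Finset.smul_sum, Matrix.vecMul, dotProduct,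
      Finset.sum_smul, smul_smul]
    rw [Finset.sum_comm]

/-! ### Matrix invariants -/

/-- The matrix of the linear substitution expressing the entries of `g * A i * g⁻¹`, `i : I`, in
those of the matrices `A i`. -/
def conjMatrix {k N : Type*} [Field k] [Fintype N] [DecidableEq N] (I : Type*) [DecidableEq I]
    (g : (Matrix N N k)ˣ) : Matrix (I × N × N) (I × N × N) k :=
  Matrix.of fun p q =>
    if p.1 = q.1 then (g : Matrix N N k) p.2.1 q.2.1 * (↑g⁻¹ : Matrix N N k) q.2.2 p.2.2 else 0

/-- The nonempty products of generic matrices, where the generic matrix with index `i` has entries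
`X (i, s, t)`. -/
def genericWords (k I N : Type*) [Field k] [Fintype N] [DecidableEq N] :
    Subsemigroup (Matrix N N (MvPolynomial (I × N × N) k)) where
  carrier := {M | ∃ l : List I, l ≠ [] ∧
    M = (l.map fun i => Matrix.of fun s t => X (i, s, t)).prod}
  mul_mem' := by
    rintro _ _ ⟨l, hl, rfl⟩ ⟨l', -, rfl⟩
    exact ⟨l ++ l', by simp [hl], by simp⟩

/-- The homogeneous case, for any subalgebra containing the traces of words. -/
theorem mem_of_isHomogeneous {k I N : Type*} [Field k] [CharZero k] [Fintype I] [DecidableEq I]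
    [Fintype N] [DecidableEq N] (S : Subalgebra k (MvPolynomial (I × N × N) k))
    (hS : ∀ M ∈ genericWords k I N, M.trace ∈ S) {d : ℕ}
    (P : MvPolynomial (I × N × N) k) (hP : P.IsHomogeneous d)
    (hinv : ∀ g : (Matrix N N k)ˣ, linSubst (conjMatrix I g) P = P) : P ∈ S := by
  obtain ⟨c, hc, rfl⟩ := exists_symm_rep P hP
  -- A word in the variables is a triple of words.
  let e : ((Fin d → I) × (Fin d → N) × (Fin d → N)) ≃ (Fin d → I × N × N) :=
    { toFun := fun p j => (p.1 j, p.2.1 j, p.2.2 j)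
      invFun := fun w => (fun j => (w j).1, fun j => (w j).2.1, fun j => (w j).2.2)
      left_inv := fun p => rfl
      right_inv := fun w => rfl }
  let C : (Fin d → I) → Matrix (Fin d → N) (Fin d → N) k :=
    fun a => Matrix.of fun t s => c (e (a, s, t))
  -- The invariance of `c` at `(a, s, t)`: only the words with the same `a` contribute.
  have hCG : ∀ a (g : (Matrix N N k)ˣ),
      C a = wordMatrix d (↑g⁻¹ : Matrix N N k) * C a * wordMatrix d (g : Matrix N N k) := by
    intro a g
    ext t s
    have h1 := congrFun (coeff_invariant c hc _ (hinv g)) (e (a, s, t))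
    rw [Matrix.vecMul, dotProduct, ← e.sum_comp, Fintype.sum_prod_type,
      Finset.sum_eq_single a] at h1
    · rw [Fintype.sum_prod_type] at h1
      simp only [C, Matrix.of_apply]
      rw [← h1, Matrix.mul_apply]
      refine Finset.sum_congr rfl fun u _ => ?_
      rw [Matrix.mul_apply, Finset.sum_mul]
      refine Finset.sum_congr rfl fun v _ => ?_
      simp only [wordMatrix, conjMatrix, e, Equiv.coe_fn_mk, Matrix.of_apply, if_true,
        Finset.prod_mul_distrib]
      ring
    · intro b _ hb
      refine Finset.sum_eq_zero fun p _ => ?_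
      obtain ⟨j, hj⟩ := Function.ne_iff.1 hb
      have : wordMatrix d (conjMatrix I g) (e (b, p)) (e (a, s, t)) = 0 := by
        refine Finset.prod_eq_zero (Finset.mem_univ j) ?_
        simp [conjMatrix, e, hj]
      rw [this, mul_zero]
    · simp
  have hcomm : ∀ a (g : (Matrix N N k)ˣ),
      C a * wordMatrix d (g : Matrix N N k) = wordMatrix d g * C a := by
    intro a g
    conv_rhs => rw [hCG a g]
    rw [← mul_assoc, ← mul_assoc, ← wordMatrix_mul, Units.mul_inv, wordMatrix_one, one_mul]
  have hspan : ∀ a, ∃ b : Equiv.Perm (Fin d) → k, ∑ σ, b σ • permHom k N d σ = C a := by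
    intro a
    refine (Submodule.mem_span_range_iff_exists_fun k).1 (mem_span_of_commute _ _ fun A hA => ?_)
    refine mul_comm_of_symmetric _ (hcomm a) _ fun s t σ => ?_
    rw [← permHom_mul_apply σ A, hA, mul_permHom_apply]
  choose b hb using hspan
  rw [← e.sum_comp, Fintype.sum_prod_type]
  refine S.sum_mem fun a _ => ?_
  have hcb : ∀ s t, c (e (a, s, t)) = ∑ σ : Equiv.Perm (Fin d), if s = t ∘ σ then b a σ else 0 := by
    intro s t
    have := congrFun (congrFun (hb a) t) s
    simp only [C, Matrix.of_apply] at this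
    rw [← this, Matrix.sum_apply]
    simp [permHom]
  simp only [hcb, Finset.sum_smul]
  rw [Finset.sum_comm]
  refine S.sum_mem fun σ _ => ?_
  rw [Fintype.sum_prod_type_right]
  have key : ∑ t : Fin d → N, ∏ j, (X (a (σ⁻¹ j), t j, t (σ⁻¹ j)) :
      MvPolynomial (I × N × N) k) ∈ S := by
    convert! sum_prod_perm_mem (genericWords k I N) S hS (Fin d) σ⁻¹
      (fun j => Matrix.of fun s t => X (a (σ⁻¹ j), s, t))
      (fun j => ⟨[a (σ⁻¹ j)], by simp, by simp⟩)
  convert! S.smul_mem key (b a σ) using 1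
  rw [Finset.smul_sum]
  refine Finset.sum_congr rfl fun t _ => ?_
  rw [Finset.sum_eq_single (t ∘ σ)]
  · rw [if_pos rfl]
    congr 1
    exact Fintype.prod_equiv σ _ _ fun j => by simp [e]
  · intro s _ hs
    rw [if_neg hs, zero_smul]
  · simp

/-- Procesi's theorem (first fundamental theorem for matrix invariants): every polynomial
in the entries of `m` generic `n×n` matrices that is invariant under simultaneous
conjugation lies in the subalgebra generated by the traces of words
`tr(A_{i₁} A_{i₂} ⋯ A_{i_r})`, `r ≥ 1`, in the generic matrices. -/
theorem stmt_16 {k : Type*} [Field k] [CharZero k] {m n : ℕ} (hm : 1 ≤ m) (hn : 1 ≤ n)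
    (P : MvPolynomial (Fin m × Fin n × Fin n) k)
    (hP : ∀ (g : (Matrix (Fin n) (Fin n) k)ˣ) (A : Fin m → Matrix (Fin n) (Fin n) k),
      MvPolynomial.eval
          (fun p : Fin m × Fin n × Fin n =>
            ((g : Matrix (Fin n) (Fin n) k) * A p.1 * (↑g⁻¹ : Matrix (Fin n) (Fin n) k))
              p.2.1 p.2.2) P
        = MvPolynomial.eval (fun p : Fin m × Fin n × Fin n => A p.1 p.2.1 p.2.2) P) :
    P ∈ Algebra.adjoin k
      {q : MvPolynomial (Fin m × Fin n × Fin n) k |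
        ∃ (r : ℕ), 0 < r ∧ ∃ i : Fin r → Fin m,
          q = Matrix.trace (List.ofFn (fun j : Fin r =>
            (Matrix.of fun s t : Fin n => MvPolynomial.X ((i j, s, t) : Fin m × Fin n × Fin n) :
              Matrix (Fin n) (Fin n) (MvPolynomial (Fin m × Fin n × Fin n) k)))).prod} := by
  have hinv : ∀ g : (Matrix (Fin n) (Fin n) k)ˣ, linSubst (conjMatrix (Fin m) g) P = P := by
    intro g
    refine MvPolynomial.funext fun x => ?_
    have h := hP g fun i => Matrix.of fun s t => x (i, s, t)
    simp only [Matrix.of_apply] at h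
    rw [← h, linSubst, ← coe_aeval_eq_eval, RingHom.coe_coe, ← AlgHom.comp_apply, comp_aeval,
      ← coe_aeval_eq_eval, RingHom.coe_coe]
    congr 2
    ext ⟨i, s, t⟩
    simp only [map_sum, map_smul, aeval_X, smul_eq_mul, conjMatrix, Matrix.of_apply,
      Fintype.sum_prod_type, Matrix.mul_apply, Finset.sum_mul]
    rw [Finset.sum_eq_single i]
    · rw [Finset.sum_comm]
      refine Finset.sum_congr rfl fun v _ => Finset.sum_congr rfl fun u _ => ?_
      rw [if_pos rfl]
      ring
    · intro i' _ hi
      simp [hi.symm]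
    · simp
  rw [← sum_homogeneousComponent P]
  refine Subalgebra.sum_mem _ fun d _ => mem_of_isHomogeneous _ ?_ _
    (homogeneousComponent_isHomogeneous d P) fun g => ?_
  · rintro _ ⟨l, hl, rfl⟩
    refine Algebra.subset_adjoin ⟨l.length, List.length_pos_iff.2 hl, l.get, ?_⟩
    congr 2
    apply List.ext_get <;> simp
  · rw [← homogeneousComponent_linSubst, hinv]
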